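/- arXiv:2509.02373 — 3 statements merged into one kernel-verified Lean document; each statement's English description precedes it below -/
import Mathlib

section
/- Fix integers c ≥ 2 and m̄ ≥ 1, take fair partitioning probabilities p_j = 1/c for all j = 1, …, c, and let N̄ : ℕ → ℝ be the PSR sequence for these parameters. Then for every δ > m̄ one has N̄_δ ≤ 8 e (c+1) δ / (m̄ + 1), where e is Euler's number. -/
lemma psr_mean (n : ℕ) (p : ℝ) :
    ∑ i ∈ Finset.range (n + 1), (n.choose i : ℝ) * p ^ i * (1 - p) ^ (n - i) * (i : ℝ) = n * p := by
  have h := congrArg (Polynomial.eval p) (bernsteinPolynomial.sum_smul ℝ n)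
  simp only [Polynomial.eval_finsetSum, nsmul_eq_mul, bernsteinPolynomial, Polynomial.eval_mul,
    Polynomial.eval_natCast, Polynomial.eval_pow, Polynomial.eval_X, Polynomial.eval_sub,
    Polynomial.eval_one] at h
  rw [← h]
  exact Finset.sum_congr rfl fun i _ => by ring

lemma psr_geom (n : ℕ) (p x : ℝ) :
    ∑ i ∈ Finset.range (n + 1), (n.choose i : ℝ) * p ^ i * (1 - p) ^ (n - i) * x ^ i
      = (p * x + (1 - p)) ^ n := by
  rw [add_pow]
  refine Finset.sum_congr rfl fun i _ => ?_
  rw [mul_pow]; ring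

/-- comparison of the correction term with the case of two partitions -/
lemma psr_F (c : ℝ) (hc : 2 ≤ c) (s : ℝ) (hs0 : 0 ≤ s) (hs1 : s ≤ 1) (n : ℕ) :
    1 - 2 * (1 - s / 2) ^ n + (1 - s) ^ n ≤ c - 1 - c * (1 - s / c) ^ n + (1 - s) ^ n := by
  induction n with
  | zero => simp; linarith
  | succ n ih =>
    have hd : s / c ≤ s / 2 := div_le_div_of_nonneg_left hs0 (by norm_num) hc
    have h : (1 - s / 2) ^ n ≤ (1 - s / c) ^ n :=
      pow_le_pow_left₀ (by linarith) (by linarith) n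
    have h2 := mul_le_mul_of_nonneg_left h hs0
    have e : c * (1 - s / c) ^ (n + 1) = c * (1 - s / c) ^ n - s * (1 - s / c) ^ n := by
      have : c ≠ 0 := by linarith
      rw [pow_succ]; field_simp
    rw [e, pow_succ (1 - s / 2)]
    linarith

lemma psr_pow (M n : ℕ) (hM : 2 ≤ M) (hn : M ≤ n) :
    (1 - 1 / (M : ℝ)) ^ n ≤ 3 / 8 := by
  have hM' : (2 : ℝ) ≤ M := by exact_mod_cast hM
  have h0 : 0 ≤ 1 - 1 / (M : ℝ) := by
    rw [sub_nonneg, div_le_one (by linarith)]; linarith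
  have h1 : 1 - 1 / (M : ℝ) ≤ 1 := by
    have : 0 ≤ 1 / (M : ℝ) := by positivity
    linarith
  calc (1 - 1 / (M : ℝ)) ^ n ≤ (1 - 1 / (M : ℝ)) ^ M := pow_le_pow_of_le_one h0 h1 hn
    _ ≤ Real.exp (-1) := Real.one_sub_div_pow_le_exp_neg (by linarith)
    _ ≤ 3 / 8 := by
      rw [Real.exp_neg, inv_le_comm₀ (Real.exp_pos _) (by norm_num)]
      have := Real.exp_one_gt_d9
      norm_num at this ⊢
      linarith

/-- For fair partitioning probabilities `p j = 1/c`, the PSR sequence `N`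
(defined by `N δ = 1` for `δ ≤ m` and the general PSR recursion for `δ > m`)
satisfies, for every `δ > m`, the bound `N δ ≤ 8 e (c+1) δ / (m+1)`,
where `e` is Euler's number. -/
theorem psr_fair_upper_bound
    (c m : ℕ) (hc : 2 ≤ c) (hm : 1 ≤ m)
    (p : ℕ → ℝ)
    (hfair : ∀ j ∈ Finset.Icc 1 c, p j = 1 / (c : ℝ))
    (N : ℕ → ℝ)
    (hN0 : ∀ δ, δ ≤ m → N δ = 1)
    (hNrec : ∀ δ, m < δ → N δ =
      (1 + ∑ j ∈ Finset.Icc 1 c, ∑ i ∈ Finset.range δ,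
          (δ.choose i : ℝ) * p j ^ i * (1 - p j) ^ (δ - i) * N i) /
        (1 - ∑ j ∈ Finset.Icc 1 c, p j ^ δ)) :
    ∀ δ, m < δ → N δ ≤ 8 * Real.exp 1 * ((c : ℝ) + 1) * (δ : ℝ) / ((m : ℝ) + 1) := by
  have hcR : (2 : ℝ) ≤ c := by exact_mod_cast hc
  have hc0 : (0 : ℝ) < c := by linarith
  have hmR : (1 : ℝ) ≤ m := by exact_mod_cast hm
  have hM0 : (0 : ℝ) < (m : ℝ) + 1 := by linarith
  obtain ⟨s, hs⟩ : ∃ s : ℝ, s = 2 / ((m : ℝ) + 1) := ⟨_, rfl⟩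
  have hs0 : 0 ≤ s := by rw [hs]; positivity
  have hs1 : s ≤ 1 := by rw [hs, div_le_one hM0]; linarith
  obtain ⟨q, hq⟩ : ∃ q : ℝ, q = 1 / (c : ℝ) := ⟨_, rfl⟩
  have hq0 : 0 < q := by rw [hq]; positivity
  have hcq : (c : ℝ) * q = 1 := by rw [hq]; field_simp
  have hq1 : q ≤ 1 / 2 := by nlinarith
  have key : ∀ δ, N δ ≤ 1 + c * (4 * s * δ - 4 + 4 * (1 - s) ^ δ) := by
    intro δ
    induction δ using Nat.strong_induction_on with
    | _ δ ih =>
      rcases Nat.lt_or_ge m δ with hδ | hδ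
      · have hrec := hNrec δ hδ
        rw [Finset.sum_congr rfl (fun j hj => by rw [hfair j hj, ← hq] :
            ∀ j ∈ Finset.Icc 1 c, (∑ i ∈ Finset.range δ,
              (δ.choose i : ℝ) * p j ^ i * (1 - p j) ^ (δ - i) * N i) =
              ∑ i ∈ Finset.range δ, (δ.choose i : ℝ) * q ^ i * (1 - q) ^ (δ - i) * N i),
          Finset.sum_congr rfl (fun j hj => by rw [hfair j hj, ← hq] :
            ∀ j ∈ Finset.Icc 1 c, p j ^ δ = q ^ δ)] at hrec
        simp only [Finset.sum_const, Nat.card_Icc, Nat.add_sub_cancel, nsmul_eq_mul] at hrec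
        have hden : 0 < 1 - (c : ℝ) * q ^ δ := by
          have h1 : q ^ δ ≤ q ^ 2 := pow_le_pow_of_le_one hq0.le (by linarith) (by omega)
          have h2 : (c : ℝ) * q ^ δ ≤ c * q ^ 2 := mul_le_mul_of_nonneg_left h1 hc0.le
          have h3 : (c : ℝ) * q ^ 2 = q := by rw [pow_two, ← mul_assoc, hcq, one_mul]
          linarith
        rw [hrec, div_le_iff₀ hden]
        have hle : ∑ i ∈ Finset.range δ, (δ.choose i : ℝ) * q ^ i * (1 - q) ^ (δ - i) * N i ≤
            ∑ i ∈ Finset.range δ, (δ.choose i : ℝ) * q ^ i * (1 - q) ^ (δ - i) *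
              (1 + c * (4 * s * i - 4 + 4 * (1 - s) ^ i)) := by
          refine Finset.sum_le_sum fun i hi => ?_
          refine mul_le_mul_of_nonneg_left (ih i (Finset.mem_range.1 hi)) ?_
          have : 0 ≤ 1 - q := by linarith
          positivity
        have hfull : ∑ i ∈ Finset.range (δ + 1), (δ.choose i : ℝ) * q ^ i * (1 - q) ^ (δ - i) *
              (1 + c * (4 * s * i - 4 + 4 * (1 - s) ^ i)) =
            1 + c * (4 * s * (δ * q) - 4 + 4 * (1 - s * q) ^ δ) := by
          have e1 := psr_mean δ q
          have e2 := psr_geom δ q (1 - s)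
          have e3 := psr_geom δ q 1
          simp only [one_pow, mul_one, add_sub_cancel] at e3
          have e4 : q * (1 - s) + (1 - q) = 1 - s * q := by ring
          rw [e4] at e2
          calc _ = (1 - 4 * c) * (∑ i ∈ Finset.range (δ + 1),
                    (δ.choose i : ℝ) * q ^ i * (1 - q) ^ (δ - i))
                + 4 * c * s * (∑ i ∈ Finset.range (δ + 1),
                    (δ.choose i : ℝ) * q ^ i * (1 - q) ^ (δ - i) * (i : ℝ))
                + 4 * c * (∑ i ∈ Finset.range (δ + 1),
                    (δ.choose i : ℝ) * q ^ i * (1 - q) ^ (δ - i) * (1 - s) ^ i) := by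
                rw [Finset.mul_sum, Finset.mul_sum, Finset.mul_sum, ← Finset.sum_add_distrib,
                  ← Finset.sum_add_distrib]
                exact Finset.sum_congr rfl fun i _ => by ring
            _ = _ := by rw [e1, e2, e3]; ring
        rw [Finset.sum_range_succ] at hfull
        simp only [Nat.choose_self, Nat.cast_one, one_mul, Nat.sub_self, pow_zero, mul_one]
          at hfull
        have hF := psr_F c hcR s hs0 hs1 δ
        have hP := psr_pow (m + 1) δ (by omega) (by omega)
        have hs2 : 1 - s / 2 = 1 - 1 / ((m + 1 : ℕ) : ℝ) := by
          rw [hs]; push_cast; field_simp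
        rw [← hs2] at hP
        have hsq : s / c = s * q := by rw [hq]; ring
        rw [hsq] at hF
        have hpos : 0 ≤ (1 - s) ^ δ := pow_nonneg (by linarith) _
        have hle2 := mul_le_mul_of_nonneg_left hle hc0.le
        have hg : 1 + c * (4 * s * (δ * q) - 4 + 4 * (1 - s * q) ^ δ) ≤
            4 * s * δ - 4 + 4 * (1 - s) ^ δ := by
          have : c * (4 * s * (δ * q)) = 4 * s * δ := by
            calc c * (4 * s * (δ * q)) = 4 * s * δ * (c * q) := by ring
              _ = _ := by rw [hcq, mul_one]
          linarith
        have hg2 := mul_le_mul_of_nonneg_left hg hc0.le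
        rw [← hfull] at hg2
        linarith
      · rw [hN0 δ hδ]
        have hb := one_add_mul_le_pow (show (-2 : ℝ) ≤ -s by linarith) δ
        rw [← sub_eq_add_neg] at hb
        have : 0 ≤ (c : ℝ) * (4 * s * δ - 4 + 4 * (1 - s) ^ δ) :=
          mul_nonneg hc0.le (by linarith)
        linarith
  intro δ hδ
  have hk := key δ
  have hp1 : (1 - s) ^ δ ≤ 1 := pow_le_one₀ (by linarith) (by linarith)
  have h1 : (c : ℝ) * (4 * s * δ - 4 + 4 * (1 - s) ^ δ) ≤ c * (4 * s * δ) :=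
    mul_le_mul_of_nonneg_left (by linarith) hc0.le
  have hδR : (m : ℝ) + 1 ≤ δ := by exact_mod_cast hδ
  have he := Real.exp_one_gt_d9
  refine hk.trans ?_
  rw [le_div_iff₀ hM0]
  have hsm : s * ((m : ℝ) + 1) = 2 := by rw [hs]; field_simp
  have h2 : (1 + c * (4 * s * δ)) * ((m : ℝ) + 1) = (m + 1) + 8 * c * δ := by
    calc _ = (m + 1) + 4 * c * δ * (s * ((m : ℝ) + 1)) := by ring
      _ = _ := by rw [hsm]; ring
  have h3 : (1 + c * (4 * s * δ - 4 + 4 * (1 - s) ^ δ)) * ((m : ℝ) + 1) ≤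
      (1 + c * (4 * s * δ)) * ((m : ℝ) + 1) :=
    mul_le_mul_of_nonneg_right (by linarith) hM0.le
  have h4 : 8 * 1 * (((c : ℝ) + 1) * δ) ≤ 8 * Real.exp 1 * (((c : ℝ) + 1) * δ) :=
    mul_le_mul_of_nonneg_right (by linarith) (by positivity)
  have h5 : (0 : ℝ) ≤ δ := by positivity
  linarith
end

section
/- Fix integers c ≥ 2 and m̄ ≥ 1 and reals p_1, …, p_c ∈ (0,1) with p_1 + … + p_c = 1, and let N̄ be the PSR sequence and T̄ the EPSR exchange sequence for the same parameters. Then T̄_δ ≤ N̄_δ for every δ ≥ 0, and T̄_δ < N̄_δ for every δ > m̄; that is, in expectation EPSR never exchanges more Set Reconciliation data structures than PSR. -/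
/-- With the same parameters `c ≥ 2`, `m ≥ 1` and probabilities
`p 1, …, p c ∈ (0,1)` summing to `1`, the EPSR exchange sequence `T` never
exceeds the PSR sequence `N`: `T δ ≤ N δ` for every `δ ≥ 0`, and the
inequality is strict for every `δ > m`. -/
theorem epsr_exchange_le_psr
    (c m : ℕ) (hc : 2 ≤ c) (hm : 1 ≤ m)
    (p : ℕ → ℝ)
    (hp : ∀ j ∈ Finset.Icc 1 c, p j ∈ Set.Ioo (0 : ℝ) 1)
    (hsum : ∑ j ∈ Finset.Icc 1 c, p j = 1)
    (F : ℕ → ℝ)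
    (hF : ∀ j, F j = ∑ i ∈ Finset.Icc 1 j, p i)
    (N : ℕ → ℝ)
    (hN0 : ∀ δ, δ ≤ m → N δ = 1)
    (hNrec : ∀ δ, m < δ → N δ =
      (1 + ∑ j ∈ Finset.Icc 1 c, ∑ i ∈ Finset.range δ,
          (δ.choose i : ℝ) * p j ^ i * (1 - p j) ^ (δ - i) * N i) /
        (1 - ∑ j ∈ Finset.Icc 1 c, p j ^ δ))
    (T : ℕ → ℝ)
    (hT0 : ∀ δ, δ ≤ m → T δ = 1)
    (hTrec : ∀ δ, m < δ → T δ =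
      ((∑ j ∈ Finset.Icc 1 c, ∑ i ∈ Finset.range δ,
          (δ.choose i : ℝ) * p j ^ i * (1 - p j) ^ (δ - i) * T i)
        - ∑ j ∈ Finset.Icc 1 (c - 2), ∑ i ∈ Finset.range (m + 1),
            (δ.choose i : ℝ) * (1 - F j) ^ i * F j ^ (δ - i)) /
        (1 - ∑ j ∈ Finset.Icc 1 c, p j ^ δ)) :
    (∀ δ, T δ ≤ N δ) ∧ (∀ δ, m < δ → T δ < N δ) := by
  have hden : ∀ δ, m < δ → 0 < 1 - ∑ j ∈ Finset.Icc 1 c, p j ^ δ := by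
    intro δ hδ
    have h : ∑ j ∈ Finset.Icc 1 c, p j ^ δ < ∑ j ∈ Finset.Icc 1 c, p j := by
      apply Finset.sum_lt_sum_of_nonempty
      · exact ⟨1, Finset.mem_Icc.mpr ⟨le_refl 1, by omega⟩⟩
      · intro j hj
        exact pow_lt_self_of_lt_one₀ (hp j hj).1 (hp j hj).2 (by omega)
    linarith
  have hF0 : ∀ j ∈ Finset.Icc 1 (c - 2), 0 ≤ F j ∧ F j ≤ 1 := by
    intro j hj
    have hsub : Finset.Icc 1 j ⊆ Finset.Icc 1 c :=
      Finset.Icc_subset_Icc_right (by have := (Finset.mem_Icc.mp hj).2; omega)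
    rw [hF j]
    refine ⟨Finset.sum_nonneg fun i hi => (hp i (hsub hi)).1.le, ?_⟩
    rw [← hsum]
    exact Finset.sum_le_sum_of_subset_of_nonneg hsub fun i hi _ => (hp i hi).1.le
  have hsub : ∀ δ, 0 ≤ ∑ j ∈ Finset.Icc 1 (c - 2), ∑ i ∈ Finset.range (m + 1),
            (δ.choose i : ℝ) * (1 - F j) ^ i * F j ^ (δ - i) := by
    intro δ
    refine Finset.sum_nonneg fun j hj => Finset.sum_nonneg fun i _ => ?_
    have h1 := (hF0 j hj).1
    have h2 : 0 ≤ 1 - F j := sub_nonneg.mpr (hF0 j hj).2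
    positivity
  have hstep : ∀ δ, m < δ → (∀ i, i < δ → T i ≤ N i) → T δ < N δ := by
    intro δ hδ ih
    rw [hTrec δ hδ, hNrec δ hδ]
    apply div_lt_div_of_pos_right _ (hden δ hδ)
    have h : ∑ j ∈ Finset.Icc 1 c, ∑ i ∈ Finset.range δ,
          (δ.choose i : ℝ) * p j ^ i * (1 - p j) ^ (δ - i) * T i ≤
        ∑ j ∈ Finset.Icc 1 c, ∑ i ∈ Finset.range δ,
          (δ.choose i : ℝ) * p j ^ i * (1 - p j) ^ (δ - i) * N i := by
      refine Finset.sum_le_sum fun j hj => Finset.sum_le_sum fun i hi => ?_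
      apply mul_le_mul_of_nonneg_left (ih i (Finset.mem_range.mp hi))
      have h1 := (hp j hj).1
      have h2 : 0 ≤ 1 - p j := sub_nonneg.mpr (hp j hj).2.le
      positivity
    have := hsub δ
    linarith
  have hle : ∀ δ, T δ ≤ N δ := by
    intro δ
    induction δ using Nat.strong_induction_on with
    | _ δ ih =>
      by_cases h : δ ≤ m
      · rw [hT0 δ h, hN0 δ h]
      · exact (hstep δ (not_le.mp h) ih).le
  exact ⟨hle, fun δ hδ => hstep δ hδ fun i _ => hle i⟩
end

section
/- Fix integers c ≥ 2 and m̄ ≥ 1 and reals p_1, …, p_c ∈ (0,1) with p_1 + … + p_c = 1, and let T̄ be the EPSR exchange sequence and Ū the EPSR recovery sequence for the same parameters. Then Ū_δ ≥ T̄_δ for every δ ≥ 0, and Ū_δ > T̄_δ for every δ > m̄; that is, in expectation EPSR performs at least as many recovery calls as the number of Set Reconciliation data structures it exchanges. -/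
/-- With the same parameters `c ≥ 2`, `m ≥ 1` and probabilities
`p 1, …, p c ∈ (0,1)` summing to `1`, the EPSR recovery sequence `U` dominates
the EPSR exchange sequence `T`: `U δ ≥ T δ` for every `δ ≥ 0`, and the
inequality is strict for every `δ > m`. -/
theorem epsr_recovery_ge_exchange
    (c m : ℕ) (hc : 2 ≤ c) (hm : 1 ≤ m)
    (p : ℕ → ℝ)
    (hp : ∀ j ∈ Finset.Icc 1 c, p j ∈ Set.Ioo (0 : ℝ) 1)
    (hsum : ∑ j ∈ Finset.Icc 1 c, p j = 1)
    (F : ℕ → ℝ)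
    (hF : ∀ j, F j = ∑ i ∈ Finset.Icc 1 j, p i)
    (T : ℕ → ℝ)
    (hT0 : ∀ δ, δ ≤ m → T δ = 1)
    (hTrec : ∀ δ, m < δ → T δ =
      ((∑ j ∈ Finset.Icc 1 c, ∑ i ∈ Finset.range δ,
          (δ.choose i : ℝ) * p j ^ i * (1 - p j) ^ (δ - i) * T i)
        - ∑ j ∈ Finset.Icc 1 (c - 2), ∑ i ∈ Finset.range (m + 1),
            (δ.choose i : ℝ) * (1 - F j) ^ i * F j ^ (δ - i)) /
        (1 - ∑ j ∈ Finset.Icc 1 c, p j ^ δ))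
    (U : ℕ → ℝ)
    (hU0 : ∀ δ, δ ≤ m → U δ = 1)
    (hUrec : ∀ δ, m < δ → U δ =
      ((∑ j ∈ Finset.Icc 1 c, ∑ i ∈ Finset.range δ,
          (δ.choose i : ℝ) * p j ^ i * (1 - p j) ^ (δ - i) * U i)
        + ((c : ℝ) - 1)
        - 2 * ∑ j ∈ Finset.Icc 1 (c - 2), ∑ i ∈ Finset.range (m + 1),
            (δ.choose i : ℝ) * (1 - F j) ^ i * F j ^ (δ - i)) /
        (1 - ∑ j ∈ Finset.Icc 1 c, p j ^ δ)) :
    (∀ δ, T δ ≤ U δ) ∧ (∀ δ, m < δ → T δ < U δ) := by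
  have hF0 : ∀ j ∈ Finset.Icc 1 (c - 2), 0 ≤ F j ∧ F j ≤ 1 := by
    intro j hj
    rw [Finset.mem_Icc] at hj
    have hsub : Finset.Icc 1 j ⊆ Finset.Icc 1 c := Finset.Icc_subset_Icc le_rfl (by omega)
    rw [hF]
    refine ⟨Finset.sum_nonneg fun i hi => (hp i (hsub hi)).1.le, ?_⟩
    rw [← hsum]
    exact Finset.sum_le_sum_of_subset_of_nonneg hsub fun i hi _ => (hp i hi).1.le
  have hS : ∀ δ, m < δ → ∑ j ∈ Finset.Icc 1 (c - 2), ∑ i ∈ Finset.range (m + 1),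
            (δ.choose i : ℝ) * (1 - F j) ^ i * F j ^ (δ - i) < (c : ℝ) - 1 := by
    intro δ hδ
    have h1 : ∑ j ∈ Finset.Icc 1 (c - 2), ∑ i ∈ Finset.range (m + 1),
            (δ.choose i : ℝ) * (1 - F j) ^ i * F j ^ (δ - i)
            ≤ ∑ j ∈ Finset.Icc 1 (c - 2), (1 : ℝ) := by
      refine Finset.sum_le_sum fun j hj => ?_
      obtain ⟨h0, h1⟩ := hF0 j hj
      have h2 : (0 : ℝ) ≤ 1 - F j := by linarith
      have h3 : ∑ i ∈ Finset.range (δ + 1),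
            (δ.choose i : ℝ) * (1 - F j) ^ i * F j ^ (δ - i) = 1 := by
        have h4 := add_pow (1 - F j) (F j) δ
        rw [sub_add_cancel, one_pow] at h4
        refine Eq.trans ?_ h4.symm
        exact Finset.sum_congr rfl fun i _ => by ring
      refine le_trans ?_ h3.le
      refine Finset.sum_le_sum_of_subset_of_nonneg ?_ fun i _ _ => by positivity
      exact Finset.range_subset_range.2 (by omega)
    have h2 : ((c - 2 : ℕ) : ℝ) = (c : ℝ) - 2 := by
      rw [Nat.cast_sub hc]; norm_num
    simp only [Finset.sum_const, Nat.card_Icc, Nat.add_sub_cancel, nsmul_eq_mul, mul_one, h2] at h1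
    linarith
  have hden : ∀ δ, m < δ → 0 < 1 - ∑ j ∈ Finset.Icc 1 c, p j ^ δ := by
    intro δ hδ
    rw [sub_pos, ← hsum]
    refine Finset.sum_lt_sum_of_nonempty ⟨1, by simp; omega⟩ fun j hj => ?_
    exact pow_lt_self_of_lt_one₀ (hp j hj).1 (hp j hj).2 (by omega)
  have main : ∀ δ, T δ ≤ U δ ∧ (m < δ → T δ < U δ) := by
    intro δ
    induction δ using Nat.strong_induction_on with
    | _ δ ih =>
      rcases Nat.lt_or_ge m δ with h | h
      · have hlt : T δ < U δ := by
          rw [hTrec δ h, hUrec δ h]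
          refine div_lt_div_of_pos_right ?_ (hden δ h)
          have h1 : (∑ j ∈ Finset.Icc 1 c, ∑ i ∈ Finset.range δ,
              (δ.choose i : ℝ) * p j ^ i * (1 - p j) ^ (δ - i) * T i) ≤
              ∑ j ∈ Finset.Icc 1 c, ∑ i ∈ Finset.range δ,
              (δ.choose i : ℝ) * p j ^ i * (1 - p j) ^ (δ - i) * U i := by
            refine Finset.sum_le_sum fun j hj => Finset.sum_le_sum fun i hi => ?_
            have h2 := (hp j hj).1
            have h3 : 0 < 1 - p j := sub_pos.2 (hp j hj).2
            exact mul_le_mul_of_nonneg_left (ih i (Finset.mem_range.1 hi)).1 (by positivity)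
          have h2 := hS δ h
          linarith
        exact ⟨hlt.le, fun _ => hlt⟩
      · exact ⟨by rw [hT0 δ h, hU0 δ h], fun h' => absurd h' (by omega)⟩
  exact ⟨fun δ => (main δ).1, fun δ => (main δ).2⟩
end
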